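/- arXiv:2001.00424 — 2 statements merged into one kernel-verified Lean document; each statement's English description precedes it below -/
import Mathlib

section
/- Every optimal matching preclusion set of the 4-dimensional bubble-sort star graph BS_4 is trivial: if F ⊆ E(BS_4) has |F| = mp(BS_4) = 5 and BS_4 − F has no perfect matching, then there is a vertex u of BS_4 such that every edge of F is incident with u (so F is the set of all five edges incident with u). -/
/-!
`BS_4` is a 5-regular bipartite graph; its classes are the 12 even and the 12 odd permutations.
Suppose `BS_4 - F` has no perfect matching. By Hall's theorem some set `S` of even vertices
satisfies `|U| < |S|`, where `U` is the neighbourhood of `S` in `BS_4 - F`. All `5|S|` edges at `S`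
end in `U` or belong to `F`, so `5|S| ≤ 5|U| + |F| = 5|U| + 5 ≤ 5|S|`. Equality holds throughout:
`|S| = |U| + 1`, the set `F` consists exactly of the edges from `S` to odd vertices outside `U`
(`hall_violator_tight`), and every edge at `U` leads to `S`, that is `N(U) ⊆ S`.

This contradicts the expansion property `|N(U)| ≥ |U| + 2`, which holds for every set `U` of odd
vertices with `1 ≤ |U| ≤ 10` (`expansion`). Hence `|U| = 0`, and `F` lies in the star of the only
vertex of `S`; or `|U| = 11`, and `F` lies in the star of the only odd vertex outside `U`.

Expansion follows from the fact that two distinct vertices have at least 7 neighbours altogether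
(`seven_le_card_union`): this settles `|U| ≤ 5`, and for `|U| ≥ 6` the same fact is applied to the
set of even vertices outside `N(U)`, whose neighbours all lie outside `U`.
-/

/-- The generating relation of the bubble-sort star graph: `u = v ∘ ⟨1,i⟩` for some
`i ∈ [2,n]` (0-based: swap of positions `0` and `i` with `i ≠ 0`), or `u = v ∘ ⟨i-1,i⟩`
for some `i ∈ [3,n]` (0-based: swap of consecutive positions `i, j = i+1` with `i ≥ 1`). -/
def bssRel (n : ℕ) (u v : Equiv.Perm (Fin n)) : Prop :=
  (∃ i : Fin n, (i : ℕ) ≠ 0 ∧ u = v * Equiv.swap ⟨0, i.pos⟩ i) ∨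
  (∃ i j : Fin n, (i : ℕ) + 1 = (j : ℕ) ∧ 1 ≤ (i : ℕ) ∧ u = v * Equiv.swap i j)

/-- The `n`-dimensional bubble-sort star graph `BS_n`, on the permutations of `{1,…,n}`. -/
def BS (n : ℕ) : SimpleGraph (Equiv.Perm (Fin n)) := SimpleGraph.fromRel (bssRel n)

/-- A set of edges `M` is a perfect matching of `G`: `M` consists of edges of `G` and
every vertex lies in exactly one edge of `M`. -/
def IsPM {V : Type*} (G : SimpleGraph V) (M : Set (Sym2 V)) : Prop :=
  M ⊆ G.edgeSet ∧ ∀ v : V, ∃! e : Sym2 V, e ∈ M ∧ v ∈ e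

/-- A set of edges `M` is an almost-perfect matching of `G`: there is exactly one
vertex lying in no edge of `M`, and every other vertex lies in exactly one edge of `M`. -/
def IsAPM {V : Type*} (G : SimpleGraph V) (M : Set (Sym2 V)) : Prop :=
  M ⊆ G.edgeSet ∧ ∃ w : V, (∀ e ∈ M, w ∉ e) ∧ ∀ v : V, v ≠ w → ∃! e : Sym2 V, e ∈ M ∧ v ∈ e

/-- `G` has neither a perfect matching nor an almost-perfect matching. -/
def HasNoMatchings {V : Type*} (G : SimpleGraph V) : Prop :=
  (¬ ∃ M, IsPM G M) ∧ (¬ ∃ M, IsAPM G M)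

/-- `(S, F)` is a strong matching preclusion set of `G`: deleting the vertices of `S`
(with all incident edges) and the edges of `F` leaves a graph with neither a perfect
matching nor an almost-perfect matching. -/
def IsSMPSet {V : Type*} (G : SimpleGraph V) (S : Set V) (F : Set (Sym2 V)) : Prop :=
  F ⊆ G.edgeSet ∧ HasNoMatchings ((G.deleteEdges F).induce (Sᶜ : Set V))

/-- `F` is a matching preclusion set of `G`: `G - F` has neither a perfect matching
nor an almost-perfect matching. -/
def IsMPSet {V : Type*} (G : SimpleGraph V) (F : Set (Sym2 V)) : Prop :=
  F ⊆ G.edgeSet ∧ HasNoMatchings (G.deleteEdges F)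

/-- `BS_n^i`: the set of permutations whose last entry equals `i`. -/
def BSslice {n : ℕ} (i : Fin n) : Set (Equiv.Perm (Fin n)) :=
  {a | a ⟨n - 1, Nat.sub_lt i.pos Nat.one_pos⟩ = i}

/-- `(V₁, V₂)` is a bipartition of `G`: the two classes partition the vertices and every
edge has one end in each class. -/
def Bipartition {V : Type*} (G : SimpleGraph V) (V1 V2 : Set V) : Prop :=
  Disjoint V1 V2 ∧ V1 ∪ V2 = Set.univ ∧
    ∀ ⦃u v⦄, G.Adj u v → (u ∈ V1 ∧ v ∈ V2) ∨ (u ∈ V2 ∧ v ∈ V1)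

namespace BubbleSortStarFour

open Equiv Finset

/-! ### The bipartite 5-regular structure -/

/-- The five transpositions of positions generating `BS_4` (positions numbered from `0`). -/
def gens : Finset (Perm (Fin 4)) :=
  {swap 0 1, swap 0 2, swap 0 3, swap 1 2, swap 2 3}

/-- The neighbourhood of `v` in `BS_4`, as a left translate of the generating set. -/
def nb (v : Perm (Fin 4)) : Finset (Perm (Fin 4)) :=
  gens.map (Equiv.mulLeft v).toEmbedding

/-- The even permutations. -/
def evens : Finset (Perm (Fin 4)) := univ.filter fun v => Perm.sign v = 1

/-- The odd permutations. -/
def odds : Finset (Perm (Fin 4)) := univ.filter fun v => Perm.sign v = -1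

lemma mem_nb {v w : Perm (Fin 4)} : w ∈ nb v ↔ ∃ g ∈ gens, v * g = w := by
  rw [nb, mem_map]
  rfl

lemma card_evens : #evens = 12 := by decide +kernel

lemma card_odds : #odds = 12 := by decide +kernel

lemma mul_self_of_mem_gens : ∀ g ∈ gens, g * g = 1 := by decide +kernel

lemma sign_of_mem_gens : ∀ g ∈ gens, Perm.sign g = -1 := by decide +kernel

lemma mem_nb_comm {v w : Perm (Fin 4)} : w ∈ nb v ↔ v ∈ nb w := by
  suffices h : ∀ v w : Perm (Fin 4), w ∈ nb v → v ∈ nb w from ⟨h v w, h w v⟩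
  intro v w h
  obtain ⟨g, hg, rfl⟩ := mem_nb.1 h
  exact mem_nb.2 ⟨g, hg, by rw [mul_assoc, mul_self_of_mem_gens g hg, mul_one]⟩

lemma card_nb (v : Perm (Fin 4)) : #(nb v) = 5 := by
  rw [nb, card_map]
  decide +kernel

lemma sign_of_mem_nb {v w : Perm (Fin 4)} (h : w ∈ nb v) : Perm.sign w = -Perm.sign v := by
  obtain ⟨g, hg, rfl⟩ := mem_nb.1 h
  simp [sign_of_mem_gens g hg]

lemma mem_odds_of_mem_nb {v w : Perm (Fin 4)} (hv : v ∈ evens) (h : w ∈ nb v) : w ∈ odds := by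
  simp only [evens, odds, mem_filter, mem_univ, true_and] at *
  rw [sign_of_mem_nb h, hv]

lemma mem_evens_of_mem_nb {v w : Perm (Fin 4)} (hv : v ∈ odds) (h : w ∈ nb v) : w ∈ evens := by
  simp only [evens, odds, mem_filter, mem_univ, true_and] at *
  rw [sign_of_mem_nb h, hv, neg_neg]

lemma not_mem_odds {v : Perm (Fin 4)} (hv : v ∈ evens) : v ∉ odds := by
  simp only [evens, odds, mem_filter, mem_univ, true_and] at *
  rw [hv]
  decide

lemma mem_evens_or_mem_odds (v : Perm (Fin 4)) : v ∈ evens ∨ v ∈ odds := by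
  simpa [evens, odds] using Int.units_eq_one_or (Perm.sign v)

lemma bssRel_four {u v : Perm (Fin 4)} : bssRel 4 u v ↔ u ∈ nb v := by
  rw [mem_nb]
  constructor
  · rintro (⟨i, hi, rfl⟩ | ⟨i, j, hij, hi, rfl⟩)
    · refine ⟨_, ?_, rfl⟩
      revert hi; revert i
      decide +kernel
    · refine ⟨_, ?_, rfl⟩
      revert hij hi; revert i j
      decide +kernel
  · rintro ⟨g, hg, rfl⟩
    simp only [gens, mem_insert, mem_singleton] at hg
    rcases hg with rfl | rfl | rfl | rfl | rfl
    · exact Or.inl ⟨1, by decide, rfl⟩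
    · exact Or.inl ⟨2, by decide, rfl⟩
    · exact Or.inl ⟨3, by decide, rfl⟩
    · exact Or.inr ⟨1, 2, by decide, by decide, rfl⟩
    · exact Or.inr ⟨2, 3, by decide, by decide, rfl⟩

lemma adj_iff {u v : Perm (Fin 4)} : (BS 4).Adj u v ↔ v ∈ nb u := by
  rw [BS, SimpleGraph.fromRel_adj, bssRel_four, bssRel_four, mem_nb_comm (v := v), or_self]
  refine ⟨And.right, fun h => ⟨?_, h⟩⟩
  rintro rfl
  rcases mem_evens_or_mem_odds u with hu | hu
  · exact not_mem_odds hu (mem_odds_of_mem_nb hu h)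
  · exact not_mem_odds (mem_evens_of_mem_nb hu h) hu

/-! ### Expansion of sets of odd vertices -/

/-- The generating set and any translate of it by `h ≠ 1` together have at least 7 elements:
a nontrivial permutation is a product of two generators in at most three ways. -/
lemma seven_le_card_gens_union :
    ∀ h : Perm (Fin 4), h ≠ 1 → 7 ≤ #(gens ∪ nb h) := by
  decide +kernel

lemma seven_le_card_union {u v : Perm (Fin 4)} (h : u ≠ v) : 7 ≤ #(nb u ∪ nb v) := by
  -- Left translation by `u` carries `gens ∪ nb (u⁻¹ * v)` to `nb u ∪ nb v`.
  have key : nb u ∪ nb v = (gens ∪ nb (u⁻¹ * v)).map (Equiv.mulLeft u).toEmbedding := by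
    rw [map_union]
    congr 1
    rw [nb, nb, map_map]
    congr 1
    ext1 g
    exact (mul_inv_cancel_left u (v * g)).symm.trans (by rw [← mul_assoc u⁻¹]; rfl)
  rw [key, card_map]
  exact seven_le_card_gens_union _ fun h' => h (inv_mul_eq_one.1 h')

lemma seven_le_card_biUnion {U : Finset (Perm (Fin 4))} (h : 2 ≤ #U) : 7 ≤ #(U.biUnion nb) := by
  obtain ⟨u, hu, v, hv, huv⟩ := one_lt_card.1 h
  exact (seven_le_card_union huv).trans (card_le_card
    (union_subset (subset_biUnion_of_mem nb hu) (subset_biUnion_of_mem nb hv)))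

lemma five_le_card_biUnion {U : Finset (Perm (Fin 4))} (h : 1 ≤ #U) : 5 ≤ #(U.biUnion nb) := by
  obtain ⟨u, hu⟩ := card_pos.1 h
  exact (card_nb u).symm.le.trans (card_le_card (subset_biUnion_of_mem nb hu))

lemma expansion {U : Finset (Perm (Fin 4))} (hU : U ⊆ odds) (h1 : 1 ≤ #U) (h2 : #U ≤ 10) :
    #U + 2 ≤ #(U.biUnion nb) := by
  by_contra! hlt
  have h5 := five_le_card_biUnion h1
  have h7 : 2 ≤ #U → 7 ≤ #(U.biUnion nb) := seven_le_card_biUnion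
  -- `W` is the set of even vertices without a neighbour in `U`.
  set W := evens \ U.biUnion nb with hW
  have hsub : U.biUnion nb ⊆ evens := by
    intro w hw
    obtain ⟨u, hu, hw⟩ := mem_biUnion.1 hw
    exact mem_evens_of_mem_nb (hU hu) hw
  have hWcard : #W = 12 - #(U.biUnion nb) := by
    rw [hW, card_sdiff_of_subset hsub, card_evens]
  have hWsub : W.biUnion nb ⊆ odds \ U := by
    intro y hy
    obtain ⟨w, hw, hy⟩ := mem_biUnion.1 hy
    obtain ⟨hwe, hwn⟩ := mem_sdiff.1 hw
    exact mem_sdiff.2 ⟨mem_odds_of_mem_nb hwe hy,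
      fun hyU => hwn (mem_biUnion.2 ⟨y, hyU, mem_nb_comm.1 hy⟩)⟩
  have hle := card_le_card hWsub
  rw [card_sdiff_of_subset hU, card_odds] at hle
  have h5' : 1 ≤ #W → 5 ≤ #(W.biUnion nb) := five_le_card_biUnion
  have h7' : 2 ≤ #W → 7 ≤ #(W.biUnion nb) := seven_le_card_biUnion
  omega

/-! ### Counting the edges at a Hall violator -/

/-- The number of edges between `S` and `U`, counted from either side. -/
lemma sum_card_inter_comm (S U : Finset (Perm (Fin 4))) :
    ∑ x ∈ S, #(nb x ∩ U) = ∑ y ∈ U, #(nb y ∩ S) := by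
  have h := sum_card_bipartiteAbove_eq_sum_card_bipartiteBelow
    (s := S) (t := U) (fun x y => y ∈ nb x)
  have e1 : ∀ x, bipartiteAbove (fun x y => y ∈ nb x) U x = nb x ∩ U := by
    intro x; ext y; simp [bipartiteAbove, and_comm]
  have e2 : ∀ y, bipartiteBelow (fun x y => y ∈ nb x) S y = nb y ∩ S := by
    intro y; ext x; simp [bipartiteBelow, and_comm, mem_nb_comm]
  simpa only [e1, e2] using h

/-- The edges from `S` to vertices outside `U`. -/
def leaving (S U : Finset (Perm (Fin 4))) : Finset (Sym2 (Perm (Fin 4))) :=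
  (S.sigma fun x => nb x \ U).image fun p => s(p.1, p.2)

lemma card_leaving {S : Finset (Perm (Fin 4))} (hS : S ⊆ evens) (U : Finset (Perm (Fin 4))) :
    #(leaving S U) = ∑ x ∈ S, #(nb x \ U) := by
  rw [leaving, card_image_of_injOn, card_sigma]
  rintro ⟨x, y⟩ hxy ⟨x', y'⟩ hxy' h
  simp only [coe_sigma, Set.mem_sigma_iff, mem_coe, mem_sdiff] at hxy hxy'
  simp only [Sym2.eq_iff] at h
  rcases h with ⟨rfl, rfl⟩ | ⟨rfl, rfl⟩
  · rfl
  · exact absurd (mem_odds_of_mem_nb (hS hxy'.1) hxy'.2.1) (not_mem_odds (hS hxy.1))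

/-- If five edges suffice to cut off a set `S` of even vertices from all odd vertices outside a
smaller set `U`, then these five edges are exactly the edges from `S` leaving `U`, and all
neighbours of `U` lie in `S`. -/
lemma hall_violator_tight {F : Finset (Sym2 (Perm (Fin 4)))} (hF : #F = 5)
    {S U : Finset (Perm (Fin 4))} (hS : S ⊆ evens) (hlt : #U < #S) (hsub : leaving S U ⊆ F) :
    #S = #U + 1 ∧ leaving S U = F ∧ U.biUnion nb ⊆ S := by
  have hle : #(leaving S U) ≤ 5 := hF ▸ card_le_card hsub
  have hcl := card_leaving hS U
  have htot : ∑ x ∈ S, #(nb x ∩ U) + ∑ x ∈ S, #(nb x \ U) = 5 * #S := by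
    rw [← sum_add_distrib, sum_congr rfl fun x _ => (card_inter_add_card_sdiff (nb x) U).trans
      (card_nb x), sum_const, smul_eq_mul, mul_comm]
  rw [sum_card_inter_comm] at htot
  have hbd : ∀ y ∈ U, #(nb y ∩ S) ≤ 5 := fun y _ =>
    card_nb y ▸ card_le_card inter_subset_left
  have hconst : ∑ _y ∈ U, 5 = 5 * #U := by rw [sum_const, smul_eq_mul, mul_comm]
  have hsum := sum_le_sum hbd
  refine ⟨by omega, eq_of_subset_of_card_le hsub (by omega), biUnion_subset.2 fun y hy => ?_⟩
  have heq := (sum_eq_sum_iff_of_le hbd).1 (by omega) y hy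
  exact inter_eq_left.1 (eq_of_subset_of_card_le inter_subset_left (by rw [heq, card_nb]))

/-! ### Hall's theorem -/

/-- A system of distinct representatives for the neighbourhoods of the even vertices in `BS_4 - F` is a
perfect matching of `BS_4 - F`. -/
lemma exists_isPM {F : Set (Sym2 (Perm (Fin 4)))} (f : evens → Perm (Fin 4))
    (hf : Function.Injective f) (hnb : ∀ x : evens, f x ∈ nb x ∧ s(x.1, f x) ∉ F) :
    ∃ M, IsPM ((BS 4).deleteEdges F) M := by
  have hodd : ∀ x, f x ∈ odds := fun x => mem_odds_of_mem_nb x.2 (hnb x).1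
  have himg : univ.image f = odds := by
    refine eq_of_subset_of_card_le (fun y hy => ?_) ?_
    · obtain ⟨x, -, rfl⟩ := mem_image.1 hy
      exact hodd x
    · rw [card_image_of_injective _ hf, card_univ, Fintype.card_coe, card_odds, card_evens]
  refine ⟨Set.range fun x : evens => s(x.1, f x), ?_, fun v => ?_⟩
  · rintro _ ⟨x, rfl⟩
    rw [SimpleGraph.edgeSet_deleteEdges]
    exact ⟨adj_iff.2 (hnb x).1, (hnb x).2⟩
  rcases mem_evens_or_mem_odds v with hv | hv
  · refine ⟨s(v, f ⟨v, hv⟩), ⟨⟨⟨v, hv⟩, rfl⟩, Sym2.mem_mk_left _ _⟩, ?_⟩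
    rintro _ ⟨⟨x, rfl⟩, hx⟩
    rcases Sym2.mem_iff.1 hx with rfl | rfl
    · rfl
    · exact absurd (hodd x) (not_mem_odds hv)
  · obtain ⟨x, -, rfl⟩ := mem_image.1 (himg ▸ hv)
    refine ⟨s(x.1, f x), ⟨⟨x, rfl⟩, Sym2.mem_mk_right _ _⟩, ?_⟩
    rintro _ ⟨⟨z, rfl⟩, hz⟩
    rcases Sym2.mem_iff.1 hz with h | h
    · exact absurd (h ▸ hv) (not_mem_odds z.2)
    · rw [hf h]

open Classical in
/-- Hall's theorem for the bipartite graph `BS_4 - F`: without a perfect matching there is a set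
`S` of even vertices whose neighbours in `BS_4 - F` lie in a set `U` smaller than `S`. -/
lemma exists_hall_violator {F : Finset (Sym2 (Perm (Fin 4)))}
    (h : ¬ ∃ M, IsPM ((BS 4).deleteEdges (F : Set (Sym2 (Perm (Fin 4))))) M) :
    ∃ S U : Finset (Perm (Fin 4)), S ⊆ evens ∧ U ⊆ odds ∧ #U < #S ∧ leaving S U ⊆ F := by
  let t : evens → Finset (Perm (Fin 4)) := fun x => (nb x).filter fun y => s(x.1, y) ∉ F
  have hnot : ¬ ∀ S : Finset evens, #S ≤ #(S.biUnion t) := by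
    intro hall
    obtain ⟨f, hf, hft⟩ := (all_card_le_biUnion_card_iff_exists_injective t).1 hall
    exact h (exists_isPM f hf fun x => by simpa [t] using hft x)
  push Not at hnot
  obtain ⟨S, hS⟩ := hnot
  refine ⟨S.map (Function.Embedding.subtype _), S.biUnion t, ?_, ?_, by rwa [card_map], ?_⟩
  · intro x hx
    obtain ⟨x, -, rfl⟩ := mem_map.1 hx
    exact x.2
  · intro y hy
    obtain ⟨x, -, hy⟩ := mem_biUnion.1 hy
    exact mem_odds_of_mem_nb x.2 (mem_filter.1 hy).1
  · intro e he
    obtain ⟨⟨x, y⟩, hxy, rfl⟩ := mem_image.1 he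
    obtain ⟨hx, hy⟩ := mem_sigma.1 hxy
    obtain ⟨x, hxS, rfl⟩ := mem_map.1 hx
    obtain ⟨hy, hyU⟩ := mem_sdiff.1 hy
    by_contra hF
    exact hyU (mem_biUnion.2 ⟨x, hxS, mem_filter.2 ⟨hy, hF⟩⟩)

end BubbleSortStarFour

open BubbleSortStarFour in
/-- Every optimal matching preclusion set of `BS_4` is trivial: if `F ⊆ E(BS_4)` has
`|F| = mp(BS_4) = 5` and `BS_4 - F` has no perfect matching, then all edges of `F`
are incident with one common vertex `u`. -/
theorem mp_bubbleSortStar_four_optimal_trivial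
    (F : Set (Sym2 (Equiv.Perm (Fin 4)))) (hF : F ⊆ (BS 4).edgeSet)
    (hcard : F.ncard = 5)
    (hnoPM : ¬ ∃ M, IsPM ((BS 4).deleteEdges F) M) :
    ∃ u : Equiv.Perm (Fin 4), ∀ e ∈ F, u ∈ e := by
  classical
  lift F to Finset (Sym2 (Equiv.Perm (Fin 4))) using Set.toFinite F
  rw [Set.ncard_coe_finset] at hcard
  obtain ⟨S, U, hS, hU, hlt, hsub⟩ := exists_hall_violator hnoPM
  obtain ⟨hSU, rfl, hN⟩ := hall_violator_tight hcard hS hlt hsub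
  have hU12 := Finset.card_le_card hS
  rw [card_evens] at hU12
  have hNcard := Finset.card_le_card hN
  have hext : U.card = 0 ∨ U.card = 11 := by
    by_contra! hne
    have := expansion hU (by omega) (by omega)
    omega
  rcases hext with h0 | h11
  · obtain ⟨x, rfl⟩ := Finset.card_eq_one.1 (hSU.trans (by rw [h0]))
    refine ⟨x, fun e he => ?_⟩
    obtain ⟨⟨x', y⟩, hxy, rfl⟩ := Finset.mem_image.1 (Finset.mem_coe.1 he)
    obtain rfl := Finset.mem_singleton.1 (Finset.mem_sigma.1 hxy).1
    exact Sym2.mem_mk_left _ _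
  · obtain ⟨y, hy⟩ := Finset.card_eq_one.1
      (show (odds \ U).card = 1 by rw [Finset.card_sdiff_of_subset hU, card_odds, h11])
    refine ⟨y, fun e he => ?_⟩
    obtain ⟨⟨x, y'⟩, hxy, rfl⟩ := Finset.mem_image.1 (Finset.mem_coe.1 he)
    obtain ⟨hx, hy'⟩ := Finset.mem_sigma.1 hxy
    obtain ⟨hy', hyU⟩ := Finset.mem_sdiff.1 hy'
    have hmem : y' ∈ odds \ U := Finset.mem_sdiff.2 ⟨mem_odds_of_mem_nb (hS hx) hy', hyU⟩
    rw [hy] at hmem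
    obtain rfl := Finset.mem_singleton.1 hmem
    exact Sym2.mem_mk_right _ _
end

section
/- Let n ≥ 4 and let T be a set of transpositions of the symmetric group on {1,…,n} whose transposition generating graph G(T) (the graph on vertices {1,…,n} with an edge {i,j} whenever the transposition ⟨i,j⟩ ∈ T) is connected. Let G = Cay(S_n, T) be the corresponding Cayley graph. Then for any two vertices u and v lying in distinct bipartition classes of G (i.e. u and v are permutations of opposite parity), there exists a Hamiltonian path of G from u to v. -/
/-- The Cayley graph `Cay(S_n, T)` of the symmetric group on `Fin n` with connection
set `T` (a set of transpositions, hence closed under inverses): `u` and `v = u∘t` are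
adjacent for `t ∈ T`. -/
def CayleyPerm {n : ℕ} (T : Set (Equiv.Perm (Fin n))) : SimpleGraph (Equiv.Perm (Fin n)) :=
  SimpleGraph.fromRel (fun u v => ∃ t ∈ T, u = v * t)

/-- The transposition generating graph `G(T)`: the graph on `{1,…,n}` with an edge
`{i, j}` whenever the transposition `⟨i,j⟩ ∈ T`. -/
def transGenGraph {n : ℕ} (T : Set (Equiv.Perm (Fin n))) : SimpleGraph (Fin n) :=
  SimpleGraph.fromRel (fun i j => i ≠ j ∧ Equiv.swap i j ∈ T)

namespace CayleyLaceable

open Equiv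

/-! ### Paths that exhaust a prescribed vertex set -/

/-- `HamPath r C u v`: there is a path from `u` to `v` along the relation `r` that visits every
element of `C` exactly once and visits nothing else. -/
inductive HamPath {V : Type*} (r : V → V → Prop) : Set V → V → V → Prop
  | single (u : V) : HamPath r {u} u u
  | cons {C : Set V} {u v w : V} : r u v → u ∉ C → HamPath r C v w → HamPath r (insert u C) u w

section HamPath

variable {V W : Type*} {r : V → V → Prop} {C D : Set V} {u v x y : V}

lemma HamPath.left_mem (h : HamPath r C u v) : u ∈ C := by
  cases h <;> simp

lemma HamPath.right_mem (h : HamPath r C u v) : v ∈ C := by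
  induction h with
  | single u => exact Set.mem_singleton u
  | cons _ _ _ ih => exact Set.mem_insert_of_mem _ ih

lemma HamPath.append (h₁ : HamPath r C u x) (hxy : r x y) (h₂ : HamPath r D y v)
    (hd : Disjoint C D) : HamPath r (C ∪ D) u v := by
  induction h₁ with
  | single u =>
    rw [Set.singleton_union]
    exact .cons hxy (Set.disjoint_singleton_left.1 hd) h₂
  | cons huv hu _ ih =>
    rw [Set.disjoint_insert_left] at hd
    rw [Set.insert_union]
    exact .cons huv (fun h => h.elim hu hd.1) (ih hxy hd.2)

/-- A path along which `f` is not constant can be cut at an edge across which `f` changes. -/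
lemma HamPath.split {β : Type*} (f : V → β) (h : HamPath r C u v) {z : V} (hz : z ∈ C)
    (hf : f z ≠ f u) :
    ∃ C₁ C₂ x x', HamPath r C₁ u x ∧ HamPath r C₂ x' v ∧ r x x' ∧ f x ≠ f x' ∧
      Disjoint C₁ C₂ ∧ C₁ ∪ C₂ = C := by
  induction h with
  | single u => exact absurd (congrArg f hz) hf
  | @cons C u u' v huu' hu hC ih =>
    by_cases hc : f u = f u'
    · have hzC : z ∈ C := hz.resolve_left fun h => hf (congrArg f h)
      obtain ⟨C₁, C₂, x, x', h₁, h₂, hr, hne, hd, rfl⟩ := ih hzC (hc ▸ hf)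
      rw [Set.mem_union, not_or] at hu
      exact ⟨insert u C₁, C₂, x, x', .cons huu' hu.1 h₁, h₂, hr, hne,
        Set.disjoint_insert_left.2 ⟨hu.2, hd⟩, Set.insert_union ..⟩
    · exact ⟨{u}, C, u, u', .single u, hC, huu', hc, Set.disjoint_singleton_left.2 hu,
        Set.singleton_union⟩

lemma HamPath.map {s : W → W → Prop} (f : V → W) (hf : Function.Injective f)
    (hrs : ∀ a b, r a b → s (f a) (f b)) (h : HamPath r C u v) :
    HamPath s (Set.image f C) (f u) (f v) := by
  induction h with
  | single u => rw [Set.image_singleton]; exact .single _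
  | cons huv hu _ ih =>
    rw [Set.image_insert_eq]
    exact .cons (hrs _ _ huv) (fun h => hu (hf.mem_set_image.1 h)) ih

lemma HamPath.exists_walk {G : SimpleGraph V} (hr : ∀ a b, r a b → G.Adj a b)
    (h : HamPath r C u v) : ∃ p : G.Walk u v, p.IsPath ∧ ∀ a, a ∈ p.support ↔ a ∈ C := by
  induction h with
  | single u => exact ⟨.nil, .nil, fun a => by simp⟩
  | cons huv hu _ ih =>
    obtain ⟨p, hp, hs⟩ := ih
    exact ⟨.cons (hr _ _ huv) p, hp.cons (fun h => hu ((hs _).1 h)), fun a => by simp [hs]⟩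

end HamPath

/-! ### The symmetric group on four letters -/

/-- The vertices met when reading the word `w` from `g`, the letter `i` meaning right
multiplication by the transposition of the pair `t i`. -/
def trace (t : Fin 3 → Fin 4 × Fin 4) : Perm (Fin 4) → List (Fin 3) → List (Perm (Fin 4))
  | g, [] => [g]
  | g, i :: w => g :: trace t (g * swap (t i).1 (t i).2) w

/-- The last vertex met when reading `w` from `g`. -/
def endpt (t : Fin 3 → Fin 4 × Fin 4) : Perm (Fin 4) → List (Fin 3) → Perm (Fin 4)
  | g, [] => g
  | g, i :: w => endpt t (g * swap (t i).1 (t i).2) w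

/-- Adjacency in the Cayley graph of `Perm (Fin 4)` with respect to the transpositions `t`. -/
def Step4 (t : Fin 3 → Fin 4 × Fin 4) (g g' : Perm (Fin 4)) : Prop :=
  ∃ i, g' = g * swap (t i).1 (t i).2

/-- From the identity there is a Hamiltonian path to every odd permutation of four letters. -/
def Laceable4 (t : Fin 3 → Fin 4 × Fin 4) : Prop :=
  ∀ h : Perm (Fin 4), Perm.sign h = -1 → HamPath (Step4 t) Set.univ 1 h

lemma hamPath_trace (t : Fin 3 → Fin 4 × Fin 4) (g : Perm (Fin 4)) (w : List (Fin 3))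
    (h : (trace t g w).Nodup) : HamPath (Step4 t) {x | x ∈ trace t g w} g (endpt t g w) := by
  induction w generalizing g with
  | nil => simpa [trace, endpt] using HamPath.single g
  | cons i w ih =>
    rw [trace, List.nodup_cons] at h
    have hset : {x | x ∈ trace t g (i :: w)} =
        insert g {x | x ∈ trace t (g * swap (t i).1 (t i).2) w} := by
      ext x; simp [trace]
    rw [hset]
    exact .cons ⟨i, rfl⟩ h.1 (ih _ h.2)

lemma length_trace (t : Fin 3 → Fin 4 × Fin 4) (g : Perm (Fin 4)) (w : List (Fin 3)) :
    (trace t g w).length = w.length + 1 := by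
  induction w generalizing g with
  | nil => rfl
  | cons i w ih => simp [trace, ih]

/-- The one-line notation of a permutation, read as a number in base four; it allows
permutations to be compared by comparing numbers. -/
def code (g : Perm (Fin 4)) : ℕ :=
  64 * (g 0 : ℕ) + 16 * (g 1 : ℕ) + 4 * (g 2 : ℕ) + (g 3 : ℕ)

/-- A list of words of length `23` without repeated vertices certifies laceability as soon as
every odd permutation is the endpoint of one of them: such a word meets all `24` vertices. -/
lemma laceable4_of_words (t : Fin 3 → Fin 4 × Fin 4) (ws : List (List (Fin 3)))
    (h₁ : ∀ w ∈ ws, w.length = 23 ∧ ((trace t 1 w).map code).Nodup)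
    (h₂ : ∀ h : Perm (Fin 4), Perm.sign h = -1 → ∃ w ∈ ws, code (endpt t 1 w) = code h) :
    Laceable4 t := by
  intro h hh
  obtain ⟨w, hw, he⟩ := h₂ h hh
  obtain ⟨hlen, hnd⟩ := h₁ w hw
  have hnd' := List.Nodup.of_map _ hnd
  have hcode : Function.Injective code := by
    intro a b hab
    unfold code at hab
    ext x
    have := (a 0).isLt; have := (a 1).isLt; have := (a 2).isLt; have := (a 3).isLt
    have := (b 0).isLt; have := (b 1).isLt; have := (b 2).isLt; have := (b 3).isLt
    fin_cases x <;> simp <;> omega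
  have huniv : {x | x ∈ trace t 1 w} = Set.univ := by
    have hc : (trace t 1 w).toFinset = Finset.univ := by
      rw [← Finset.card_eq_iff_eq_univ, List.toFinset_card_of_nodup hnd', length_trace, hlen,
        Fintype.card_perm]
      rfl
    ext x
    simpa using congrArg (x ∈ ·) hc
  rw [← hcode he, ← huniv]
  exact hamPath_trace t 1 w hnd'

/-- The edges of the star on four vertices with centre `0`. -/
def star : Fin 3 → Fin 4 × Fin 4 := ![(0, 1), (0, 2), (0, 3)]

/-- The edges of the path `0 - 1 - 2 - 3`. -/
def line : Fin 3 → Fin 4 × Fin 4 := ![(0, 1), (1, 2), (2, 3)]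

/-- Hamiltonian paths from the identity in the Cayley graph of the star, one for each odd
permutation. -/
def starWords : List (List (Fin 3)) :=
  [[0,1,0,1,0,2,0,1,0,1,2,1,0,1,0,1,2,1,0,1,0,1,2],
   [0,1,2,0,1,2,1,0,1,2,0,1,2,0,2,1,2,0,1,0,1,0,2],
   [0,1,0,1,0,2,1,2,1,0,1,0,1,2,1,0,2,1,0,1,2,1,0],
   [1,0,1,0,2,1,0,1,0,1,2,0,1,0,1,0,2,1,0,1,0,1,2],
   [0,1,0,1,0,2,0,2,0,1,0,1,0,2,0,1,2,0,1,0,2,0,1],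
   [0,1,0,1,0,2,1,0,1,0,2,0,1,0,1,0,2,0,1,0,1,0,2],
   [0,1,0,1,0,2,0,1,0,1,0,2,1,0,1,0,1,2,1,0,1,0,1],
   [0,1,0,1,2,0,1,0,1,0,2,1,0,1,0,1,2,0,1,0,1,0,2],
   [0,1,0,1,0,2,1,0,1,0,1,2,0,1,0,1,0,2,0,1,0,1,0],
   [0,1,0,2,0,1,0,1,0,2,1,2,0,2,1,0,2,1,0,1,2,1,0],
   [0,1,0,1,0,2,1,0,1,0,1,2,0,1,0,1,0,2,1,0,1,0,1],
   [0,1,0,1,0,2,0,1,0,1,0,2,1,0,1,0,1,2,0,1,0,1,0]]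

/-- Hamiltonian paths from the identity in the Cayley graph of the path, one for each odd
permutation. -/
def lineWords : List (List (Fin 3)) :=
  [[0,1,0,1,0,2,0,1,0,1,0,2,0,1,2,1,0,1,0,1,2,1,0],
   [0,1,0,1,2,1,0,1,2,1,2,1,0,1,0,1,2,1,0,1,2,1,2],
   [0,1,0,1,0,2,0,1,0,1,2,1,2,1,0,1,0,1,2,1,0,1,2],
   [1,0,1,0,2,0,1,0,1,0,2,0,1,2,1,0,1,0,1,2,1,0,2],
   [0,1,0,2,1,0,1,2,1,2,1,0,1,2,0,2,1,2,1,0,1,2,1],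
   [0,1,0,1,0,2,0,1,0,2,0,1,0,1,0,2,1,2,0,2,1,0,1],
   [0,1,0,1,0,2,1,0,1,2,1,2,1,0,1,0,1,2,1,0,1,2,1],
   [0,1,2,1,0,1,2,1,2,1,0,1,0,1,2,1,2,0,2,1,2,1,2],
   [0,1,0,1,0,2,0,1,0,2,1,2,1,2,0,2,1,0,1,2,1,0,1],
   [0,1,0,1,0,2,0,1,0,1,0,2,1,0,1,2,1,0,1,0,1,2,1],
   [0,1,0,1,0,2,0,1,0,2,0,1,0,1,2,1,0,1,2,0,2,1,2],
   [0,1,0,1,0,2,0,1,2,1,0,1,2,1,0,1,2,0,2,1,2,1,2]]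

lemma laceable4_star : Laceable4 star :=
  laceable4_of_words star starWords (by decide +kernel) (by decide +kernel)

lemma laceable4_line : Laceable4 line :=
  laceable4_of_words line lineWords (by decide +kernel) (by decide +kernel)

/-! ### Cosets of the subgroups of permutations supported in a set of letters -/

section General

variable {α : Type*} [DecidableEq α] (H : SimpleGraph α)

/-- Adjacency in the Cayley graph of `Perm α` with respect to the transpositions given by the
edges of `H`. -/
def Step (g g' : Perm α) : Prop := ∃ i j, H.Adj i j ∧ g' = g * swap i j

/-- The left coset of `u` modulo the subgroup of permutations supported in `S`. -/
def coset (S : Finset α) (u : Perm α) : Set (Perm α) := {g | ∀ x ∉ S, g x = u x}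

/-- Inside its coset modulo `insert l S`, the coset of `u` modulo `S` is the slice of the
permutations with the same value at `l` as `u`. -/
lemma coset_eq_slice {S : Finset α} {l : α} (hl : l ∉ S) {w u : Perm α}
    (hu : u ∈ coset (insert l S) w) : coset S u = {g ∈ coset (insert l S) w | g l = u l} := by
  ext g
  refine ⟨fun hg => ⟨fun x hx => ?_, hg l hl⟩, fun hg x hx => ?_⟩
  · rw [hg x fun h => hx (Finset.mem_insert_of_mem h), hu x hx]
  · by_cases hxl : x = l
    · rw [hxl, hg.2]
    · have hx' : x ∉ insert l S := by simp [hxl, hx]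
      rw [hg.1 x hx', hu x hx']

lemma mul_swap_mem_coset {S : Finset α} {w u : Perm α} (hu : u ∈ coset S w) {i j : α}
    (hi : i ∈ S) (hj : j ∈ S) : u * swap i j ∈ coset S w := by
  intro x hx
  rw [Perm.mul_apply, swap_apply_of_ne_of_ne, hu x hx]
  · rintro rfl; exact hx hi
  · rintro rfl; exact hx hj

variable [Fintype α]

/-- In every left coset modulo the permutations supported in `S`, any two permutations of opposite
parity are joined by a path exhausting the coset. -/
def Laceable (S : Finset α) : Prop :=
  ∀ u v : Perm α, v ∈ coset S u → Perm.sign u ≠ Perm.sign v → HamPath (Step H) (coset S u) u v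

/-- `Grow H S`: the set `S` arises from a single vertex by successively adding new vertices
adjacent in `H` to a vertex already present, so `H` has a tree with vertex set `S`. -/
inductive Grow : Finset α → Prop
  | single (a : α) : Grow {a}
  | insert {S : Finset α} {k l : α} : Grow S → k ∈ S → l ∉ S → H.Adj k l → Grow (insert l S)

variable {H}

lemma grow_univ (hH : H.Connected) : Grow H (Finset.univ : Finset α) := by
  classical
  obtain ⟨a⟩ := hH.nonempty
  obtain ⟨S, hS, hmax⟩ := Set.Finite.exists_maximal (Set.toFinite {S | Grow H S})
    ⟨{a}, Grow.single a⟩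
  rcases Finset.eq_empty_or_nonempty S with rfl | ⟨b, hb⟩
  · exact absurd (hmax (Grow.single a) (Finset.empty_subset _) (Finset.mem_singleton_self a))
      (Finset.notMem_empty a)
  by_cases hu : ∀ x, x ∈ S
  · rwa [← Finset.eq_univ_iff_forall.2 hu]
  push Not at hu
  obtain ⟨c, hc⟩ := hu
  obtain ⟨p⟩ := hH.preconnected b c
  obtain ⟨d, -, hd₁, hd₂⟩ := p.exists_boundary_dart (S : Set α) hb hc
  exact absurd (hmax (Grow.insert hS hd₁ hd₂ d.adj) (Finset.subset_insert _ _)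
    (Finset.mem_insert_self _ _)) hd₂

lemma sign_mul_swap (u : Perm α) {i j : α} (h : i ≠ j) :
    Perm.sign (u * swap i j) = -Perm.sign u := by
  rw [Perm.sign_mul, Perm.sign_swap h, mul_neg_one]

lemma eq_neg_of_sign_ne {u v : Perm α} (h : Perm.sign u ≠ Perm.sign v) :
    Perm.sign u = -Perm.sign v := Int.units_ne_iff_eq_neg.1 h

lemma sign_ne_neg (u : Perm α) : Perm.sign u ≠ -Perm.sign u :=
  Int.units_ne_iff_eq_neg.2 (neg_neg _).symm

/-- Transport from four abstract letters to a four-element set `S`, by `e` and a left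
translation. -/
lemma laceable_of_four {t : Fin 3 → Fin 4 × Fin 4} (ht : Laceable4 t) (e : Fin 4 ↪ α)
    (hadj : ∀ i, H.Adj (e (t i).1) (e (t i).2)) {S : Finset α}
    (hS : ∀ x, x ∈ S ↔ x ∈ Set.range e) : Laceable H S := by
  intro u v hv hsign
  have himage : ∀ g ∈ coset S u, ∃ h : Perm (Fin 4), u * h.viaFintypeEmbedding e = g := by
    intro g hg
    have hfix : ∀ x ∉ S, (u⁻¹ * g) x = x := fun x hx => by simp [hg x hx]
    have hmem : ∀ i, ∃ j, e j = (u⁻¹ * g) (e i) := by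
      intro i
      by_contra hcon
      have hn : (u⁻¹ * g) (e i) ∉ S := fun h => hcon ((hS _).1 h)
      exact hcon ⟨i, ((u⁻¹ * g).injective (hfix _ hn)).symm⟩
    choose f hf using hmem
    have hinj : Function.Injective f := fun i j hij =>
      e.injective ((u⁻¹ * g).injective (by rw [← hf, ← hf, hij]))
    refine ⟨Equiv.ofBijective f (Finite.injective_iff_bijective.1 hinj), ?_⟩
    rw [← eq_inv_mul_iff_mul_eq]
    ext x
    by_cases hx : x ∈ Set.range e
    · obtain ⟨i, rfl⟩ := hx
      rw [Perm.viaFintypeEmbedding_apply_image, ← hf]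
      rfl
    · rw [Perm.viaFintypeEmbedding_apply_notMem_range _ _ hx, hfix x (fun h => hx ((hS x).1 h))]
  have hcoset : coset S u =
      Set.image (fun h : Perm (Fin 4) => u * h.viaFintypeEmbedding e) Set.univ := by
    ext g
    refine ⟨fun hg => ?_, ?_⟩
    · obtain ⟨h, rfl⟩ := himage g hg
      exact ⟨h, trivial, rfl⟩
    · rintro ⟨h, -, rfl⟩ x hx
      have hx' : x ∉ Set.range e := fun h => hx ((hS x).2 h)
      simp [Perm.viaFintypeEmbedding_apply_notMem_range _ _ hx']
  obtain ⟨h, rfl⟩ := himage v hv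
  have hh : Perm.sign h = -1 := by
    rw [Perm.sign_mul, Perm.viaFintypeEmbedding_sign] at hsign
    rcases Int.units_eq_one_or (Perm.sign h) with h1 | h1
    · simp [h1] at hsign
    · exact h1
  have hmul : ∀ a b : Perm (Fin 4), (a * b).viaFintypeEmbedding e =
      a.viaFintypeEmbedding e * b.viaFintypeEmbedding e := fun a b =>
    (Perm.extendDomain_mul e.toEquivRange a b).symm
  have hswap : ∀ i j : Fin 4, (swap i j).viaFintypeEmbedding e = swap (e i) (e j) := by
    intro i j
    ext x
    by_cases hx : x ∈ Set.range e
    · obtain ⟨y, rfl⟩ := hx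
      rw [Perm.viaFintypeEmbedding_apply_image, e.swap_apply]
    · rw [Perm.viaFintypeEmbedding_apply_notMem_range _ _ hx, swap_apply_of_ne_of_ne]
      · rintro rfl; exact hx ⟨i, rfl⟩
      · rintro rfl; exact hx ⟨j, rfl⟩
  have key := (ht h hh).map (s := Step H)
    (fun h : Perm (Fin 4) => u * h.viaFintypeEmbedding e) ?_ ?_
  · have hone : (1 : Perm (Fin 4)).viaFintypeEmbedding e = 1 :=
      Perm.extendDomain_one e.toEquivRange
    rw [hcoset]
    simpa [hone] using key
  · intro a b hab
    have hab' := mul_left_cancel hab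
    ext1 i
    have := congrArg (fun p : Perm α => p (e i)) hab'
    simpa [Perm.viaFintypeEmbedding_apply_image] using this
  · rintro a _ ⟨i, rfl⟩
    exact ⟨_, _, hadj i, by simp only [hmul, hswap, mul_assoc]⟩

/-- A connected graph on four vertices contains a path or a star on all of them. -/
lemma laceable_of_card_four {S : Finset α} (hS : Grow H S) (hcard : S.card = 4) :
    Laceable H S := by
  have mk : ∀ {t : Fin 3 → Fin 4 × Fin 4}, Laceable4 t → ∀ a b c d : α,
      a ≠ b → a ≠ c → a ≠ d → b ≠ c → b ≠ d → c ≠ d →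
      (∀ i, H.Adj (![a, b, c, d] (t i).1) (![a, b, c, d] (t i).2)) →
      (∀ x, x ∈ S ↔ x = a ∨ x = b ∨ x = c ∨ x = d) → Laceable H S := by
    intro t ht a b c d hab hac had hbc hbd hcd hadj hS
    refine laceable_of_four ht ⟨![a, b, c, d], ?_⟩ hadj ?_
    · intro i j hij
      fin_cases i <;> fin_cases j <;> simp_all
    · intro x
      rw [hS]
      change _ ↔ x ∈ Set.range ![a, b, c, d]
      simp [eq_comm]
      tauto
  rcases hS with a | ⟨hS, hk, hl, hkd⟩
  · simp at hcard
  rename_i S k d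
  rw [Finset.card_insert_of_notMem hl] at hcard
  rcases hS with a | ⟨hS, hk', hl', hkc⟩
  · simp at hcard
  rename_i S k' c
  rw [Finset.card_insert_of_notMem hl'] at hcard
  rcases hS with a | ⟨hS, hk'', hl'', hkb⟩
  · simp at hcard
  rename_i S k'' b
  rw [Finset.card_insert_of_notMem hl''] at hcard
  rcases hS with a | ⟨hS, hk''', hl''', hka⟩
  swap
  · rename_i S _ _
    have := Finset.card_pos.2 ⟨_, hk'''⟩
    rw [Finset.card_insert_of_notMem hl'''] at hcard
    omega
  simp only [Finset.mem_insert, Finset.mem_singleton, not_or] at hk hl hk' hl' hk'' hl''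
  have hba := hl''
  obtain ⟨hcb, hca⟩ := hl'
  obtain ⟨hdc, hdb, hda⟩ := hl
  rw [hk''] at hkb
  rcases hk' with hk' | hk' <;> rcases hk with hk | hk | hk <;> rw [hk'] at hkc <;> rw [hk] at hkd
  · exact mk laceable4_line a b c d (by grind) (by grind) (by grind) (by grind) (by grind)
      (by grind) (by intro i; fin_cases i; exacts [hkb, hkc, hkd]) (by grind)
  · exact mk laceable4_star b a c d (by grind) (by grind) (by grind) (by grind) (by grind)
      (by grind) (by intro i; fin_cases i; exacts [hkb.symm, hkc, hkd]) (by grind)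
  · exact mk laceable4_line d a b c (by grind) (by grind) (by grind) (by grind) (by grind)
      (by grind) (by intro i; fin_cases i; exacts [hkd.symm, hkb, hkc]) (by grind)
  · exact mk laceable4_line b a c d (by grind) (by grind) (by grind) (by grind) (by grind)
      (by grind) (by intro i; fin_cases i; exacts [hkb.symm, hkc, hkd]) (by grind)
  · exact mk laceable4_line c a b d (by grind) (by grind) (by grind) (by grind) (by grind)
      (by grind) (by intro i; fin_cases i; exacts [hkc.symm, hkb, hkd]) (by grind)
  · exact mk laceable4_star a b c d (by grind) (by grind) (by grind) (by grind) (by grind)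
      (by grind) (by intro i; fin_cases i; exacts [hkb, hkc, hkd]) (by grind)

/-! ### Adding a letter -/

/-- Every slice has a vertex of the parity opposite to `u` from which the transposition `(k l)`
leads to the slice of a given other value `c`. -/
lemma exists_exit {S : Finset α} {k l : α} (hk : k ∈ S) (hcard : 3 ≤ S.card) {w u : Perm α}
    (hu : u ∈ coset (insert l S) w) {c : α} (hc : ∀ x ∉ insert l S, w x ≠ c) (hcu : u l ≠ c) :
    ∃ x ∈ coset S u, x k = c ∧ Perm.sign x = -Perm.sign u := by
  have huS : u ∈ coset S u := fun _ _ => rfl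
  obtain ⟨j, rfl⟩ := u.surjective c
  have hj : j ∈ S := by
    by_contra hj
    have hjl : j ≠ l := fun h => hcu (congrArg u h.symm)
    have : j ∉ insert l S := by simp [hjl, hj]
    exact hc j this (hu j this).symm
  by_cases hjk : j = k
  · -- No correction is needed at `k`, so the parity is changed by a transposition away from `k`.
    subst hjk
    have h2 : 1 < (S.erase j).card := by rw [Finset.card_erase_of_mem hk]; omega
    obtain ⟨p, hp, q, hq, hpq⟩ := Finset.one_lt_card.1 h2
    rw [Finset.mem_erase] at hp hq
    refine ⟨u * swap p q, mul_swap_mem_coset huS hp.2 hq.2, ?_, sign_mul_swap u hpq⟩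
    rw [Perm.mul_apply, swap_apply_of_ne_of_ne hp.1.symm hq.1.symm]
  · exact ⟨u * swap k j, mul_swap_mem_coset huS hk hj, by simp, sign_mul_swap u (Ne.symm hjk)⟩

/-- A path through prescribed slices: it starts in the slice `a`, passes through the slices of `M`
in some order and ends in the slice `b`. -/
lemma hamPath_slices {S : Finset α} {k l : α} (hk : k ∈ S) (hl : l ∉ S) (hkl : H.Adj k l)
    (hcard : 3 ≤ S.card) (ih : Laceable H S) (w v : Perm α) (b : α)
    (hv : v ∈ coset (insert l S) w) (hvb : v l = b) (M : Finset α) (a : α) (u : Perm α)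
    (ha : a ∉ M) (hb : b ∉ M) (hab : a ≠ b)
    (hM : ∀ c, c = b ∨ c ∈ M → ∀ x ∉ insert l S, w x ≠ c)
    (hu : u ∈ coset (insert l S) w) (hua : u l = a) (hs : Perm.sign u ≠ Perm.sign v) :
    HamPath (Step H) {g ∈ coset (insert l S) w | g l = a ∨ g l = b ∨ g l ∈ M} u v := by
  -- Exhaust the slice of `u` and move on to the slice `c`, with the parity of `u` restored.
  have next : ∀ (u : Perm α) (c : α), u ∈ coset (insert l S) w → u l ≠ c →
      (∀ x ∉ insert l S, w x ≠ c) → ∃ x y, HamPath (Step H) (coset S u) u x ∧ Step H x y ∧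
        y ∈ coset (insert l S) w ∧ y l = c ∧ Perm.sign y = Perm.sign u := by
    intro u c hu huc hc
    obtain ⟨x, hx, hxk, hsx⟩ := exists_exit hk hcard hu hc huc
    have hx' : x ∈ coset (insert l S) w := by
      rw [coset_eq_slice hl hu] at hx; exact hx.1
    refine ⟨x, x * swap k l, ih u x hx ?_, ⟨k, l, hkl, rfl⟩,
      mul_swap_mem_coset hx' (Finset.mem_insert_of_mem hk) (Finset.mem_insert_self _ _), ?_, ?_⟩
    · rw [hsx]; exact sign_ne_neg u
    · simpa using hxk
    · rw [sign_mul_swap x hkl.ne, hsx, neg_neg]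
  induction M using Finset.induction_on generalizing a u with
  | empty =>
    obtain ⟨x, y, hp, hxy, hy, hyb, hsy⟩ := next u b hu (hua ▸ hab) (hM b (.inl rfl))
    have hvy : v ∈ coset S y := by
      rw [coset_eq_slice hl hy]; exact ⟨hv, hvb.trans hyb.symm⟩
    have hq := ih y v hvy (hsy ▸ hs)
    rw [coset_eq_slice hl hu] at hp
    rw [coset_eq_slice hl hy] at hq
    convert hp.append hxy hq ?_ using 1
    · ext g; simp only [Set.mem_ofPred_eq, Set.mem_union, hua, hyb, Finset.notMem_empty]; tauto
    · rw [Set.disjoint_left]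
      rintro g ⟨-, h₁⟩ ⟨-, h₂⟩
      exact hab (by rw [← hua, ← h₁, h₂, hyb])
  | insert c M hcM IH =>
    simp only [Finset.mem_insert, not_or] at ha hb
    obtain ⟨x, y, hp, hxy, hy, hyc, hsy⟩ := next u c hu (hua ▸ ha.1) (hM c (.inr (Finset.mem_insert_self c M)))
    have hq := IH c y hcM hb.2 (Ne.symm hb.1)
      (fun c' hc' => hM c' (hc'.imp id Finset.mem_insert_of_mem)) hy hyc (hsy ▸ hs)
    rw [coset_eq_slice hl hu] at hp
    convert hp.append hxy hq ?_ using 1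
    · ext g; simp only [Set.mem_ofPred_eq, Set.mem_union, hua, Finset.mem_insert]; tauto
    · rw [Set.disjoint_left]
      rintro g ⟨-, h₁⟩ ⟨-, h₂⟩
      rw [h₁, hua] at h₂
      exact h₂.elim ha.1 fun h => h.elim hab ha.2

/-- The inductive step. If the ends lie in different slices, one runs through all slices in turn;
if they lie in the same slice, a path exhausting it is cut at an edge whose ends have different
values at `k`, and a path through all the other slices is inserted there. -/
lemma laceable_insert {S : Finset α} {k l : α} (hk : k ∈ S) (hl : l ∉ S) (hkl : H.Adj k l)
    (hcard : 3 ≤ S.card) (ih : Laceable H S) : Laceable H (insert l S) := by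
  intro u v hv hs
  have hu : u ∈ coset (insert l S) u := fun _ _ => rfl
  -- The values `c` whose slice is not empty.
  let A : Finset α := Finset.univ.filter fun c => ∀ x ∉ insert l S, u x ≠ c
  have hA : ∀ g ∈ coset (insert l S) u, ∀ i ∈ insert l S, g i ∈ A := by
    intro g hg i hi
    simp only [A, Finset.mem_filter, Finset.mem_univ, true_and]
    intro x hx h
    rw [← hg x hx] at h
    exact hx (g.injective h ▸ hi)
  have hA' : ∀ c ∈ A, ∀ x ∉ insert l S, u x ≠ c := fun c hc => (Finset.mem_filter.1 hc).2
  have hlm : l ∈ insert l S := Finset.mem_insert_self _ _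
  have hkm : k ∈ insert l S := Finset.mem_insert_of_mem hk
  by_cases huv : u l = v l
  · have hvS : v ∈ coset S u := by rw [coset_eq_slice hl hu]; exact ⟨hv, huv.symm⟩
    obtain ⟨p, hp, hpk⟩ := Finset.exists_mem_ne (by omega : 1 < S.card) k
    have hz : u * swap k p ∈ coset S u := mul_swap_mem_coset (fun _ _ => rfl) hk hp
    obtain ⟨C₁, C₂, x, x', h₁, h₂, hxx', hne, hd, hC⟩ :=
      (ih u v hvS hs).split (fun g => g k) hz (by simpa using hpk)
    have hx : x ∈ coset S u := hC ▸ Or.inl h₁.right_mem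
    have hx' : x' ∈ coset S u := hC ▸ Or.inr h₂.left_mem
    have hsub : coset S u ⊆ coset (insert l S) u := by
      rw [coset_eq_slice hl hu]; exact fun _ h => h.1
    have hsxx' : Perm.sign x ≠ Perm.sign x' := by
      obtain ⟨i, j, hij, rfl⟩ := hxx'
      rw [sign_mul_swap x hij.ne]; exact sign_ne_neg x
    have hxl : ∀ g ∈ coset S u, g k ≠ u l := fun g hg h =>
      hkl.ne (g.injective (h.trans (hg l hl).symm))
    have h := hamPath_slices hk hl hkl hcard ih u (x' * swap k l) (x' k)
      (mul_swap_mem_coset (hsub hx') hkm hlm) (by simp)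
      (((A.erase (u l)).erase (x k)).erase (x' k)) (x k) (x * swap k l) (by simp) (by simp) hne
      (fun c hc => hA' c ?_) (mul_swap_mem_coset (hsub hx) hkm hlm) (by simp)
      (by simpa [sign_mul_swap _ hkl.ne] using hsxx')
    · have hD : {g ∈ coset (insert l S) u | g l = x k ∨ g l = x' k ∨
          g l ∈ ((A.erase (u l)).erase (x k)).erase (x' k)} =
          {g ∈ coset (insert l S) u | g l ≠ u l} := by
        ext g
        simp only [Set.mem_ofPred_eq, and_congr_right_iff, Finset.mem_erase]
        intro hg
        have h₁ := hA g hg l hlm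
        have h₂ := hxl x hx
        have h₃ := hxl x' hx'
        grind
      have hcut : coset S u = {g ∈ coset (insert l S) u | g l = u l} := coset_eq_slice hl hu
      rw [hD] at h
      have hd₁ : Disjoint C₁ {g ∈ coset (insert l S) u | g l ≠ u l} :=
        Set.disjoint_left.2 fun g hg hg' => hg'.2 ((hC ▸ Or.inl hg : g ∈ coset S u) l hl)
      have hd₂ : Disjoint {g ∈ coset (insert l S) u | g l ≠ u l} C₂ :=
        Set.disjoint_right.2 fun g hg hg' => hg'.2 ((hC ▸ Or.inr hg : g ∈ coset S u) l hl)
      have hall : C₁ ∪ ({g ∈ coset (insert l S) u | g l ≠ u l} ∪ C₂) = coset (insert l S) u := by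
        rw [Set.union_left_comm, hC, hcut]
        ext g
        simp only [Set.mem_union, Set.mem_ofPred_eq]
        tauto
      rw [← hall]
      exact h₁.append ⟨k, l, hkl, rfl⟩ (h.append ⟨k, l, hkl, by simp [mul_assoc]⟩ h₂ hd₂)
        (Set.disjoint_union_right.2 ⟨hd₁, hd⟩)
    · rcases hc with rfl | hc
      · exact hA x' (hsub hx') k hkm
      · exact Finset.mem_of_mem_erase (Finset.mem_of_mem_erase (Finset.mem_of_mem_erase hc))
  · have h := hamPath_slices hk hl hkl hcard ih u v (v l) hv rfl ((A.erase (u l)).erase (v l)) (u l)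
      u (by simp) (by simp) huv (fun c hc => hA' c ?_) hu rfl hs
    · convert h using 1
      ext g
      refine ⟨fun hg => ⟨hg, ?_⟩, fun hg => hg.1⟩
      have := hA g hg l hlm
      simp only [Finset.mem_erase]
      tauto
    · rcases hc with rfl | hc
      · exact hA v hv l hlm
      · exact Finset.mem_of_mem_erase (Finset.mem_of_mem_erase hc)

lemma laceable_of_grow {S : Finset α} (hS : Grow H S) (hcard : 4 ≤ S.card) : Laceable H S := by
  induction hS with
  | single a => simp at hcard
  | insert hS hk hl hkl ih =>
    rcases hcard.eq_or_lt with h | h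
    · exact laceable_of_card_four (hS.insert hk hl hkl) h.symm
    · rw [Finset.card_insert_of_notMem hl] at h
      exact laceable_insert hk hl hkl (by omega) (ih (by omega))

end General

end CayleyLaceable

/-- Let `n ≥ 4` and let `T` be a set of transpositions of `S_n` whose transposition
generating graph `G(T)` is connected. Then for any two vertices `u, v` of `Cay(S_n, T)`
lying in distinct bipartition classes (permutations of opposite parity), there exists a
Hamiltonian path of `Cay(S_n, T)` from `u` to `v`. -/
theorem cayley_transpositions_hamiltonian_path (n : ℕ) (hn : 4 ≤ n)
    (T : Set (Equiv.Perm (Fin n)))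
    (hT : ∀ t ∈ T, ∃ i j : Fin n, i ≠ j ∧ t = Equiv.swap i j)
    (hconn : (transGenGraph T).Connected)
    (u v : Equiv.Perm (Fin n)) (hpar : Equiv.Perm.sign u ≠ Equiv.Perm.sign v) :
    ∃ p : (CayleyPerm T).Walk u v, p.IsHamiltonian := by
  classical
  have hcard : 4 ≤ (Finset.univ : Finset (Fin n)).card := by simpa using hn
  have hlac := CayleyLaceable.laceable_of_grow (CayleyLaceable.grow_univ hconn) hcard
  have hstep : ∀ a b, CayleyLaceable.Step (transGenGraph T) a b → (CayleyPerm T).Adj a b := by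
    rintro a _ ⟨i, j, hij, rfl⟩
    have hT' : Equiv.swap i j ∈ T := by
      rcases hij.2 with h | h
      · exact h.2
      · rw [Equiv.swap_comm]; exact h.2
    refine ⟨fun h => ?_, .inr ⟨_, hT', rfl⟩⟩
    exact hij.ne (Equiv.swap_eq_one_iff.1 (mul_eq_left.1 h.symm))
  obtain ⟨p, hp, hs⟩ := (hlac u v (by simp [CayleyLaceable.coset]) hpar).exists_walk hstep
  refine ⟨p, hp.isHamiltonian_of_mem fun a => (hs a).2 ?_⟩
  simp [CayleyLaceable.coset]
end
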